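/- (Polynomial approximations of negative power functions) Let ε, δ ∈ (0, 1/2], let c > 0, and define f(x) = (δ^c / 2)·x^{−c} for x ∈ [δ, 1]. There is a universal constant K > 0 such that there exist an even real polynomial P and an odd real polynomial P′, each of degree at most K·(max(1,c)/δ)·log(1/ε), satisfying |P(x) − f(x)| ≤ ε and |P′(x) − f(x)| ≤ ε for all x ∈ [δ, 1], and |P(x)| ≤ 1 and |P′(x)| ≤ 1 for all x ∈ [−1, 1]. -/

import Mathlib

/-!
Fix the parity `σ ∈ {0, 1}`. The generalised binomial expansion of `(x² + (1 - x²)) ^ α = 1`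
with `α = N + (c + σ) / 2`, truncated after `R` terms and multiplied by `x ^ (-c)`, is a
polynomial in `x` of parity `σ`. The truncation is an incomplete Beta function of `x²`:
comparing it with those of other exponents shows that for `N ≈ max(1, c)² log(1/ε) / δ²` and
suitable `R` it is `ε`-close to `1` on `[δ, 1]`, while its zero at `0` cancels the pole of
`x ^ (-c)`.

The degree of this polynomial is quadratically too large. But it is a combination of monomials
`x ^ (2N + σ - 2r) (1 - x²) ^ r` with nonnegative weights, so the identity
`|cos z|² + |sin z|² = cosh (2 Im z)` bounds it at `cos z` by `exp ((2N + σ) (Im z)²)`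
times its maximum on `[0, 1]`: it is of size `1/ε` on the strip of width `η ≈ δ / max(1, c)`. Its
Chebyshev coefficients therefore decay like `exp (-jη)`. Modifying those of index at most
`n ≈ log(1/ε) / η` and dropping the others changes it by `O(ε)` only: the correction is a
multiplier with convex decreasing coefficients, that is, a positive combination of Fejér kernels,
and so costs no logarithmic factor.
-/

open Polynomial

section FejerKernel

open Real Finset

/-- The unnormalised Fejér kernel `‖∑_{k < m} exp (i k φ)‖ ^ 2`, written out in real terms. -/
noncomputable def fejerKernel (m : ℕ) (φ : ℝ) : ℝ :=
  (∑ k ∈ range m, cos (k * φ)) ^ 2 + (∑ k ∈ range m, sin (k * φ)) ^ 2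

/-- The cosine polynomial with frequencies in `s` and coefficients `g`. -/
noncomputable def cosSum (s : Finset ℕ) (g : ℕ → ℝ) (θ : ℝ) : ℝ :=
  ∑ j ∈ s, g j * cos (j * θ)

lemma fejerKernel_nonneg (m : ℕ) (φ : ℝ) : 0 ≤ fejerKernel m φ := by
  unfold fejerKernel
  positivity

lemma continuous_fejerKernel (m : ℕ) : Continuous (fejerKernel m) := by
  unfold fejerKernel
  fun_prop

lemma continuous_cosSum (s : Finset ℕ) (g : ℕ → ℝ) : Continuous (cosSum s g) := by
  unfold cosSum
  fun_prop

lemma fejerKernel_eq_sum_cos (m : ℕ) (φ : ℝ) :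
    fejerKernel m φ = ∑ k ∈ range m, ∑ l ∈ range m, cos (((k - l : ℤ) : ℝ) * φ) := by
  simp only [fejerKernel, sq, sum_mul_sum, ← sum_add_distrib, ← cos_sub]
  push_cast
  simp only [sub_mul]

lemma integral_cos_add_int_mul (k : ℤ) (α : ℝ) :
    ∫ φ in (0 : ℝ)..2 * π, cos (α + k * φ) = if k = 0 then 2 * π * cos α else 0 := by
  split_ifs with hk
  · simp [hk]
  · rw [intervalIntegral.integral_comp_add_mul cos (Int.cast_ne_zero.2 hk) α, integral_cos,
      sin_add_int_mul_two_pi]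
    simp

lemma integral_cos_mul_add_mul_cos (j k : ℤ) (θ : ℝ) :
    ∫ φ in (0 : ℝ)..2 * π, cos (j * (θ + φ)) * cos (k * φ) =
      π * cos (j * θ) * ((if k = j then 1 else 0) + if k = -j then 1 else 0) := by
  have product_to_sum (φ : ℝ) : cos (j * (θ + φ)) * cos (k * φ) =
      (cos (j * θ + (j - k : ℤ) * φ) + cos (j * θ + (j + k : ℤ) * φ)) / 2 := by
    rw [eq_div_iff two_ne_zero, mul_comm, ← mul_assoc, two_mul_cos_mul_cos]
    push_cast
    ring_nf
  simp only [product_to_sum]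
  rw [intervalIntegral.integral_div, intervalIntegral.integral_add
    (Continuous.intervalIntegrable (by fun_prop) _ _)
    (Continuous.intervalIntegrable (by fun_prop) _ _),
    integral_cos_add_int_mul, integral_cos_add_int_mul]
  simp only [sub_eq_zero, eq_comm (a := j), ← eq_neg_iff_add_eq_zero, neg_eq_iff_eq_neg]
  split_ifs <;> ring

lemma sum_range_sum_range_ite_sub_eq (m j : ℕ) :
    ∑ k ∈ range m, ∑ l ∈ range m, (if (k - l : ℤ) = j then (1 : ℝ) else 0) = (m - j : ℕ) := by
  have filter_eq : {l ∈ range m | l + j < m} = range (m - j) := by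
    ext l
    simp only [mem_filter, mem_range]
    lia
  have sub_eq_iff (k l : ℕ) : (k - l : ℤ) = j ↔ k = l + j := by lia
  rw [sum_comm]
  simp only [sub_eq_iff, sum_ite_eq', mem_range, sum_boole, filter_eq, card_range]

lemma integral_cos_mul_fejerKernel (m j : ℕ) (θ : ℝ) :
    ∫ φ in (0 : ℝ)..2 * π, cos (j * (θ + φ)) * fejerKernel m φ =
      2 * π * ((m - j : ℕ) * cos (j * θ)) := by
  have sub_eq_neg_iff (k l : ℕ) : (k - l : ℤ) = -j ↔ (l - k : ℤ) = j := by lia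
  have sum_ite_neg : ∑ k ∈ range m, ∑ l ∈ range m,
      (if (k - l : ℤ) = -j then (1 : ℝ) else 0) = (m - j : ℕ) := by
    rw [sum_comm]
    simp only [sub_eq_neg_iff, sum_range_sum_range_ite_sub_eq]
  calc ∫ φ in (0 : ℝ)..2 * π, cos (j * (θ + φ)) * fejerKernel m φ
      = ∫ φ in (0 : ℝ)..2 * π, ∑ k ∈ range m, ∑ l ∈ range m,
          cos ((j : ℤ) * (θ + φ)) * cos ((k - l : ℤ) * φ) := by
        simp only [fejerKernel_eq_sum_cos, mul_sum, Int.cast_natCast]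
    _ = ∑ k ∈ range m, ∑ l ∈ range m, ∫ φ in (0 : ℝ)..2 * π,
          cos ((j : ℤ) * (θ + φ)) * cos ((k - l : ℤ) * φ) := by
        rw [intervalIntegral.integral_finsetSum
          fun _ _ ↦ Continuous.intervalIntegrable (by fun_prop) _ _]
        exact sum_congr rfl fun _ _ ↦ intervalIntegral.integral_finsetSum
          fun _ _ ↦ Continuous.intervalIntegrable (by fun_prop) _ _
    _ = 2 * π * ((m - j : ℕ) * cos (j * θ)) := by
        simp only [integral_cos_mul_add_mul_cos, ← mul_sum, sum_add_distrib,
          sum_range_sum_range_ite_sub_eq, sum_ite_neg]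
        rw [Int.cast_natCast]
        ring

/-- Convolution with the Fejér kernel multiplies the `j`-th coefficient by `(m - j)⁺`, which the
truncated subtraction of `ℕ` expresses. -/
lemma integral_cosSum_mul_fejerKernel (s : Finset ℕ) (g : ℕ → ℝ) (m : ℕ) (θ : ℝ) :
    ∫ φ in (0 : ℝ)..2 * π, cosSum s g (θ + φ) * fejerKernel m φ =
      2 * π * cosSum s (fun j ↦ (m - j : ℕ) * g j) θ := by
  have hK := continuous_fejerKernel m
  simp only [cosSum, sum_mul, mul_assoc (g _)]
  rw [intervalIntegral.integral_finsetSum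
    fun _ _ ↦ Continuous.intervalIntegrable (by fun_prop) _ _, mul_sum]
  refine sum_congr rfl fun j _ ↦ ?_
  rw [intervalIntegral.integral_const_mul, integral_cos_mul_fejerKernel]
  ring

lemma integral_fejerKernel (m : ℕ) : ∫ φ in (0 : ℝ)..2 * π, fejerKernel m φ = 2 * π * m := by
  simpa [cosSum] using integral_cosSum_mul_fejerKernel {0} 1 m 0

/-- `c` acts on cosine polynomials, coefficient by coefficient, as an operator of norm at most `B`
for the supremum norm. -/
def IsCosineMultiplier (c : ℕ → ℝ) (B : ℝ) : Prop :=
  ∀ (s : Finset ℕ) (g : ℕ → ℝ) (M : ℝ), (∀ θ, |cosSum s g θ| ≤ M) →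
    ∀ θ, |cosSum s (c * g) θ| ≤ B * M

namespace IsCosineMultiplier

variable {c c' : ℕ → ℝ} {B B' : ℝ}

lemma const {a : ℝ} (ha : 0 ≤ a) : IsCosineMultiplier (fun _ ↦ a) a := by
  intro s g M hM θ
  have : cosSum s ((fun _ ↦ a) * g) θ = a * cosSum s g θ := by
    simp [cosSum, mul_sum, mul_assoc]
  rw [this, abs_mul, abs_of_nonneg ha]
  gcongr
  exact hM θ

lemma add (hc : IsCosineMultiplier c B) (hc' : IsCosineMultiplier c' B') :
    IsCosineMultiplier (c + c') (B + B') := by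
  intro s g M hM θ
  have : cosSum s ((c + c') * g) θ = cosSum s (c * g) θ + cosSum s (c' * g) θ := by
    simp [cosSum, add_mul, sum_add_distrib]
  rw [this, add_mul]
  exact (abs_add_le _ _).trans (add_le_add (hc s g M hM θ) (hc' s g M hM θ))

lemma const_mul {a : ℝ} (ha : 0 ≤ a) (hc : IsCosineMultiplier c B) :
    IsCosineMultiplier (fun j ↦ a * c j) (a * B) := by
  intro s g M hM θ
  have : cosSum s ((fun j ↦ a * c j) * g) θ = a * cosSum s (c * g) θ := by
    simp [cosSum, mul_sum, mul_assoc]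
  rw [this, abs_mul, abs_of_nonneg ha, mul_assoc]
  gcongr
  exact hc s g M hM θ

lemma sum {ι : Type*} {t : Finset ι} {c : ι → ℕ → ℝ} {B : ι → ℝ}
    (hc : ∀ i ∈ t, IsCosineMultiplier (c i) (B i)) :
    IsCosineMultiplier (∑ i ∈ t, c i) (∑ i ∈ t, B i) := by
  induction t using Finset.cons_induction with
  | empty => exact const le_rfl
  | cons i t hi ih =>
    rw [sum_cons, sum_cons]
    exact (hc i (mem_cons_self i t)).add (ih fun k hk ↦ hc k (mem_cons_of_mem hk))

/-- The Fejér kernel is nonnegative, so the norm is its mean. -/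
lemma fejer (m : ℕ) : IsCosineMultiplier (fun j ↦ (m - j : ℕ)) m := by
  intro s g M hM θ
  have hK := continuous_fejerKernel m
  have hg := continuous_cosSum s g
  have integral_bound : |∫ φ in (0 : ℝ)..2 * π, cosSum s g (θ + φ) * fejerKernel m φ| ≤
      ∫ φ in (0 : ℝ)..2 * π, M * fejerKernel m φ := by
    refine (intervalIntegral.abs_integral_le_integral_abs two_pi_pos.le).trans ?_
    refine intervalIntegral.integral_mono_on two_pi_pos.le
      (Continuous.intervalIntegrable (by fun_prop) _ _)
      (Continuous.intervalIntegrable (by fun_prop) _ _) fun φ _ ↦ ?_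
    rw [abs_mul, abs_of_nonneg (fejerKernel_nonneg m φ)]
    exact mul_le_mul_of_nonneg_right (hM _) (fejerKernel_nonneg m φ)
  rw [integral_cosSum_mul_fejerKernel, intervalIntegral.integral_const_mul, integral_fejerKernel,
    abs_mul, abs_of_pos two_pi_pos, mul_left_comm] at integral_bound
  exact (le_of_mul_le_mul_left integral_bound two_pi_pos).trans_eq (mul_comm M m)

end IsCosineMultiplier

/-- Summation by parts, twice: a sequence is a combination of the Fejér multipliers
`j ↦ (m + 1 - j)⁺`, with its second differences as weights. -/
lemma eq_add_sum_second_difference_mul (c : ℕ → ℝ) {J j : ℕ} (hj : j ≤ J) :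
    c j = c J + (c J - c (J + 1)) * (J - j : ℕ) +
      ∑ m ∈ range J, ((c m - c (m + 1)) - (c (m + 1) - c (m + 2))) * (m + 1 - j : ℕ) := by
  induction J, hj using Nat.le_induction with
  | base =>
    have (m : ℕ) (hm : m ∈ range j) : m + 1 - j = 0 := Nat.sub_eq_zero_of_le (mem_range.1 hm)
    rw [sum_eq_zero fun m hm ↦ by rw [this m hm, Nat.cast_zero, mul_zero]]
    simp
  | succ J hj ih =>
    rw [sum_range_succ, Nat.succ_sub hj]
    push_cast
    linear_combination ih

/-- Pólya's criterion for multipliers. -/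
theorem IsCosineMultiplier.of_convex {c : ℕ → ℝ} (hnonneg : ∀ j, 0 ≤ c j) (hanti : Antitone c)
    (hconvex : Antitone fun j ↦ c j - c (j + 1)) : IsCosineMultiplier c (c 0) := by
  intro s g M hM θ
  set J := s.sup id
  have slope_nonneg : 0 ≤ c J - c (J + 1) := sub_nonneg.2 (hanti J.le_succ)
  have curvature_nonneg (m : ℕ) : 0 ≤ (c m - c (m + 1)) - (c (m + 1) - c (m + 2)) :=
    sub_nonneg.2 (hconvex m.le_succ)
  have fejer_combination := ((const (hnonneg J)).add ((fejer J).const_mul slope_nonneg)).add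
    (sum (t := range J) fun m _ ↦ (fejer (m + 1)).const_mul (curvature_nonneg m))
  have norm_eq := eq_add_sum_second_difference_mul c J.zero_le
  simp only [Nat.sub_zero] at norm_eq
  rw [← norm_eq] at fejer_combination
  convert fejer_combination s g M hM θ using 2
  refine sum_congr rfl fun j hj ↦ ?_
  have j_le : j ≤ J := le_sup (f := id) hj
  simp [eq_add_sum_second_difference_mul c j_le]

end FejerKernel

section DegreeReduction

open Real Finset

/-- The sequence that agrees with `f` from the index `n` on and continues it linearly below `n`,
with the slope `f (n + 1) - f n`. -/
noncomputable def linearExtensionBelow (f : ℕ → ℝ) (n j : ℕ) : ℝ :=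
  f (max j n) + (n - j : ℕ) * (f n - f (n + 1))

lemma linearExtensionBelow_of_le (f : ℕ → ℝ) {n j : ℕ} (h : n ≤ j) :
    linearExtensionBelow f n j = f j := by
  simp [linearExtensionBelow, max_eq_left h, Nat.sub_eq_zero_of_le h]

lemma linearExtensionBelow_zero (f : ℕ → ℝ) (n : ℕ) :
    linearExtensionBelow f n 0 = f n + n * (f n - f (n + 1)) := by
  simp [linearExtensionBelow]

lemma linearExtensionBelow_sub_succ (f : ℕ → ℝ) (n j : ℕ) :
    linearExtensionBelow f n j - linearExtensionBelow f n (j + 1) =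
      f (max j n) - f (max j n + 1) := by
  rcases lt_or_ge j n with hj | hj
  · simp only [linearExtensionBelow, max_eq_right hj.le, max_eq_right (Nat.succ_le_of_lt hj),
      Nat.cast_sub hj.le, Nat.cast_sub (Nat.succ_le_of_lt hj)]
    push_cast
    ring
  · rw [linearExtensionBelow_of_le f hj, linearExtensionBelow_of_le f (hj.trans j.le_succ),
      max_eq_left hj]

lemma IsCosineMultiplier.linearExtensionBelow {f : ℕ → ℝ} (hnonneg : ∀ j, 0 ≤ f j)
    (hanti : Antitone f) (hconvex : Antitone fun j ↦ f j - f (j + 1)) (n : ℕ) :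
    IsCosineMultiplier (linearExtensionBelow f n) (f n + n * (f n - f (n + 1))) := by
  have slope_nonneg (k : ℕ) : 0 ≤ f k - f (k + 1) := sub_nonneg.2 (hanti k.le_succ)
  rw [← linearExtensionBelow_zero]
  refine of_convex (fun j ↦ ?_) (antitone_nat_of_succ_le fun j ↦ ?_) fun j k hjk ↦ ?_
  · exact add_nonneg (hnonneg _) (mul_nonneg (Nat.cast_nonneg _) (slope_nonneg n))
  · rw [← sub_nonneg, linearExtensionBelow_sub_succ]
    exact slope_nonneg _
  · simp only [linearExtensionBelow_sub_succ]
    exact hconvex (max_le_max_right n hjk)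

section Geometric

variable {r : ℝ} (hr : 0 ≤ r) (hr' : r ≤ 1)
include hr hr'

lemma antitone_pow_sub_pow_succ : Antitone fun j : ℕ ↦ r ^ j - r ^ (j + 1) := by
  have factor (j : ℕ) : r ^ j - r ^ (j + 1) = r ^ j * (1 - r) := by ring
  intro j k hjk
  simp only [factor]
  exact mul_le_mul_of_nonneg_right (pow_le_pow_of_le_one hr hr' hjk) (sub_nonneg.2 hr')

lemma IsCosineMultiplier.pow : IsCosineMultiplier (fun j ↦ r ^ j) 1 := by
  simpa using of_convex (fun j ↦ pow_nonneg hr j) (pow_right_anti₀ hr hr')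
    (antitone_pow_sub_pow_succ hr hr')

lemma IsCosineMultiplier.linearExtensionBelow_pow (n : ℕ) :
    IsCosineMultiplier (_root_.linearExtensionBelow (fun j ↦ r ^ j) n)
      (r ^ n + n * (r ^ n - r ^ (n + 1))) :=
  .linearExtensionBelow (fun j ↦ pow_nonneg hr j) (pow_right_anti₀ hr hr')
    (antitone_pow_sub_pow_succ hr hr') n

end Geometric

/-- The polynomial with Chebyshev coefficients `d` on `s`, so that `x = cos θ` turns it into
`cosSum s d`. -/
noncomputable def chebyshevSum (s : Finset ℕ) (d : ℕ → ℝ) : ℝ[X] :=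
  ∑ j ∈ s, d j • Chebyshev.T ℝ j

lemma exists_eq_chebyshevSum (p : ℝ[X]) : ∃ s d, p = chebyshevSum s d := by
  let chebyshevSequence : Polynomial.Sequence ℝ :=
    ⟨fun j ↦ Chebyshev.T ℝ j, fun j ↦ by rw [Chebyshev.degree_T, Int.natAbs_natCast]⟩
  have span_eq_top := chebyshevSequence.span fun j ↦
    (leadingCoeff_ne_zero.2 (chebyshevSequence.ne_zero j)).isUnit
  obtain ⟨d, hd⟩ := Finsupp.mem_span_range_iff_exists_finsupp.1
    (span_eq_top ▸ Submodule.mem_top : p ∈ Submodule.span ℝ (Set.range chebyshevSequence))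
  exact ⟨d.support, d, hd.symm⟩

lemma eval_cos_chebyshevSum (s : Finset ℕ) (d : ℕ → ℝ) (θ : ℝ) :
    (chebyshevSum s d).eval (cos θ) = cosSum s d θ := by
  simp [chebyshevSum, cosSum, eval_finsetSum, Chebyshev.T_real_cos]

lemma re_cos_add_mul_I (x y : ℝ) :
    (Complex.cos (x + y * Complex.I)).re = cosh y * cos x := by
  rw [Complex.cos_add_mul_I, ← Complex.ofReal_cos, ← Complex.ofReal_cosh, ← Complex.ofReal_sin,
    ← Complex.ofReal_sinh, ← Complex.ofReal_mul, ← Complex.ofReal_mul, Complex.sub_re,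
    Complex.re_ofReal_mul, Complex.ofReal_re, Complex.I_re, mul_zero, sub_zero, mul_comm]

lemma re_aeval_cos_chebyshevSum (s : Finset ℕ) (d : ℕ → ℝ) (θ η : ℝ) :
    (aeval (Complex.cos (θ + η * Complex.I)) (chebyshevSum s d)).re =
      cosSum s (fun j ↦ cosh (j * η) * d j) θ := by
  have re_cos_mul (j : ℕ) :
      (Complex.cos (j * (θ + η * Complex.I))).re = cosh (j * η) * cos (j * θ) := by
    rw [← re_cos_add_mul_I]
    push_cast
    ring_nf
  simp only [chebyshevSum, cosSum, map_sum, map_smul, Chebyshev.aeval_T, Chebyshev.T_complex_cos,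
    Int.cast_natCast, Complex.re_sum, Complex.smul_re, smul_eq_mul, re_cos_mul]
  exact sum_congr rfl fun j _ ↦ by ring

lemma natDegree_chebyshevSum_le {s : Finset ℕ} {d : ℕ → ℝ} {n : ℕ}
    (hd : ∀ j ∈ s, n < j → d j = 0) : (chebyshevSum s d).natDegree ≤ n := by
  refine natDegree_sum_le_of_forall_le s _ fun j hj ↦ ?_
  rcases le_or_gt j n with hjn | hnj
  · refine (natDegree_smul_le _ _).trans ?_
    rwa [Chebyshev.natDegree_T, Int.natAbs_natCast]
  · simp [hd j hj hnj]

/-- A sharp bound would have `M` instead of `3 * M`; the constant comes from writing the growing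
factor `exp (j * η)` as `2 * cosh (j * η) - exp (-η) ^ j`, where `exp (-η) ^ j` is a multiplier of
norm `1`. -/
lemma abs_cosSum_exp_mul_le {s : Finset ℕ} {d : ℕ → ℝ} {η M : ℝ} (hη : 0 ≤ η)
    (hM : ∀ z : ℂ, |z.im| ≤ η → ‖aeval (Complex.cos z) (chebyshevSum s d)‖ ≤ M) (θ : ℝ) :
    |cosSum s (fun j ↦ exp (j * η) * d j) θ| ≤ 3 * M := by
  have cosh_bound (y : ℝ) (hy : |y| ≤ η) (θ : ℝ) :
      |cosSum s (fun j ↦ cosh (j * y) * d j) θ| ≤ M := by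
    rw [← re_aeval_cos_chebyshevSum]
    exact (Complex.abs_re_le_norm _).trans (hM _ (by simpa using hy))
  have real_bound (θ : ℝ) : |cosSum s d θ| ≤ M := by
    simpa using cosh_bound 0 (by simpa using hη) θ
  have decay_bound := IsCosineMultiplier.pow (exp_pos (-η)).le (exp_le_one_iff.2 (neg_nonpos.2 hη))
    s d M real_bound θ
  have split_exp : cosSum s (fun j ↦ exp (j * η) * d j) θ =
      2 * cosSum s (fun j ↦ cosh (j * η) * d j) θ - cosSum s ((fun j ↦ exp (-η) ^ j) * d) θ := by
    simp only [cosSum, mul_sum, ← sum_sub_distrib, Pi.mul_apply, ← exp_nat_mul, cosh_eq, mul_neg]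
    exact sum_congr rfl fun j _ ↦ by ring
  rw [split_exp]
  grw [abs_sub, abs_mul, abs_two, cosh_bound η (abs_of_nonneg hη).le, decay_bound]
  linarith

/-- The error is `∑ h j * exp (j * η) * d j * T j`, where `h` is the linear extension below `n` of
`exp (-η) ^ j`: its coefficients beyond `n` are those of `p`. -/
theorem exists_natDegree_le_abs_eval_sub_le {p : ℝ[X]} {η M : ℝ} (hη : 0 ≤ η)
    (hM : ∀ z : ℂ, |z.im| ≤ η → ‖aeval (Complex.cos z) p‖ ≤ M) (n : ℕ) :
    ∃ q : ℝ[X], q.natDegree ≤ n ∧ ∀ x ∈ Set.Icc (-1 : ℝ) 1,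
      |q.eval x - p.eval x| ≤ 3 * (1 + n * η) * exp (-(n * η)) * M := by
  obtain ⟨s, d, rfl⟩ := exists_eq_chebyshevSum p
  set h := linearExtensionBelow (fun j ↦ exp (-η) ^ j) n
  have h_mul_exp (j : ℕ) (hj : n < j) : h j * exp (j * η) = 1 := by
    rw [show h j = exp (-η) ^ j from linearExtensionBelow_of_le _ hj.le, ← exp_nat_mul, ← exp_add,
      mul_neg, neg_add_cancel, exp_zero]
  refine ⟨chebyshevSum s fun j ↦ (1 - h j * exp (j * η)) * d j,
    natDegree_chebyshevSum_le fun j _ hj ↦ by rw [h_mul_exp j hj, sub_self, zero_mul],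
    fun x hx ↦ ?_⟩
  have error_eq : cosSum s (fun j ↦ (1 - h j * exp (j * η)) * d j) (arccos x) -
      cosSum s d (arccos x) = -cosSum s (h * fun j : ℕ ↦ exp (j * η) * d j) (arccos x) := by
    simp only [cosSum, ← sum_sub_distrib, ← sum_neg_distrib, Pi.mul_apply]
    exact sum_congr rfl fun j _ ↦ by ring
  have multiplier_bound := IsCosineMultiplier.linearExtensionBelow_pow (exp_pos (-η)).le
    (exp_le_one_iff.2 (neg_nonpos.2 hη)) n s _ _ (abs_cosSum_exp_mul_le hη hM) (arccos x)
  have M_nonneg : 0 ≤ M := (norm_nonneg _).trans (hM 0 (by simpa using hη))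
  have one_sub_exp_le : 1 - exp (-η) ≤ η := by linarith [add_one_le_exp (-η)]
  rw [← cos_arccos hx.1 hx.2, eval_cos_chebyshevSum, eval_cos_chebyshevSum, error_eq, abs_neg]
  calc |cosSum s (h * fun j : ℕ ↦ exp (j * η) * d j) (arccos x)|
      ≤ (exp (-η) ^ n + n * (exp (-η) ^ n - exp (-η) ^ (n + 1))) * (3 * M) := multiplier_bound
    _ = 3 * (1 + n * (1 - exp (-η))) * exp (-(n * η)) * M := by
        rw [pow_succ, ← exp_nat_mul, mul_neg]
        ring
    _ ≤ 3 * (1 + n * η) * exp (-(n * η)) * M := by gcongr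

end DegreeReduction

section Parity

lemma exists_parity_abs_eval_sub_le {f : ℝ → ℝ} {q : ℝ[X]} {σ : ℕ} {e : ℝ}
    (hf : ∀ x, f (-x) = (-1) ^ σ * f x)
    (hq : ∀ x ∈ Set.Icc (-1 : ℝ) 1, |q.eval x - f x| ≤ e) :
    ∃ P : ℝ[X], P.natDegree ≤ q.natDegree ∧ (∀ i, i % 2 ≠ σ % 2 → P.coeff i = 0) ∧
      ∀ x ∈ Set.Icc (-1 : ℝ) 1, |P.eval x - f x| ≤ e := by
  set reflected := C ((-1 : ℝ) ^ σ) * q.comp (C (-1) * X)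
  refine ⟨C (1 / 2) * (q + reflected), ?_, fun i hi ↦ ?_, fun x hx ↦ ?_⟩
  · have natDegree_reflected : reflected.natDegree ≤ q.natDegree := by
      refine (natDegree_C_mul_le _ _).trans (natDegree_comp_le.trans ?_)
      exact mul_le_of_le_one_right (Nat.zero_le _)
        ((natDegree_C_mul_le _ _).trans natDegree_X_le)
    exact (natDegree_C_mul_le _ _).trans
      ((natDegree_add_le _ _).trans (max_le le_rfl natDegree_reflected))
  · have sign_eq : (-1 : ℝ) ^ σ * (-1) ^ i = -1 := by
      rw [← pow_add]
      exact Odd.neg_one_pow (Nat.odd_iff.2 (by lia))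
    rw [coeff_C_mul, coeff_add, coeff_C_mul, comp_C_mul_X_coeff]
    linear_combination (1 / 2 * q.coeff i) * sign_eq
  · have at_neg := hq (-x) ⟨neg_le_neg hx.2, neg_le.1 hx.1⟩
    have sign_sq : (-1 : ℝ) ^ σ * (-1) ^ σ = 1 := by rw [← mul_pow]; norm_num
    have eval_eq : (C (1 / 2) * (q + reflected)).eval x - f x =
        (1 / 2) * ((q.eval x - f x) + (-1) ^ σ * (q.eval (-x) - f (-x))) := by
      simp only [reflected, eval_mul, eval_C, eval_add, eval_comp, eval_X, hf]
      rw [neg_one_mul]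
      linear_combination (1 / 2 * f x) * sign_sq
    rw [eval_eq, abs_mul]
    grw [abs_add_le, abs_mul, abs_neg_one_pow, hq x hx, at_neg]
    norm_num
    linarith

end Parity

section GeneralizedBinomial

lemma add_one_mul_choose_succ (α : ℝ) (k : ℕ) :
    (k + 1) * Ring.choose α (k + 1) = (α - k) * Ring.choose α k := by
  simpa [Nat.choose_succ_self_right, mul_comm] using Ring.choose_smul_choose α (Nat.le_succ k)

lemma choose_pos_of_lt {α : ℝ} {k : ℕ} (h : k < α + 1) : 0 < Ring.choose α k := by
  induction k with
  | zero => simp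
  | succ k ih =>
    push_cast at h
    have succ_pos : 0 < (k + 1) * Ring.choose α (k + 1) := by
      rw [add_one_mul_choose_succ]
      exact mul_pos (by linarith) (ih (by linarith))
    exact pos_of_mul_pos_right succ_pos (by positivity)

/-- The logarithm of each factor is at most its tangent at `e = 0`, and the tangents cancel. -/
lemma add_mul_mul_sub_rpow_le {b e x : ℝ} (hb : 0 ≤ b) (hx : 0 < x) (he : e ≤ x) :
    (x + b * e) * (x - e) ^ b ≤ x * x ^ b := by
  have tangent (t : ℝ) : x + t ≤ x * Real.exp (t / x) := by
    have := mul_le_mul_of_nonneg_left (Real.add_one_le_exp (t / x)) hx.le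
    rwa [mul_add, mul_one, mul_div_cancel₀ _ hx.ne', add_comm] at this
  have rpow_factor : (x - e) ^ b ≤ x ^ b * Real.exp (-(b * e / x)) := by
    calc (x - e) ^ b ≤ (x * Real.exp (-e / x)) ^ b :=
          Real.rpow_le_rpow (sub_nonneg.2 he) (sub_eq_add_neg x e ▸ tangent (-e)) hb
      _ = x ^ b * Real.exp (-(b * e / x)) := by
          rw [Real.mul_rpow hx.le (Real.exp_pos _).le, ← Real.exp_mul]
          ring_nf
  calc (x + b * e) * (x - e) ^ b
      ≤ (x * Real.exp (b * e / x)) * (x ^ b * Real.exp (-(b * e / x))) :=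
        mul_le_mul (tangent _) rpow_factor (Real.rpow_nonneg (sub_nonneg.2 he) b) (by positivity)
    _ = x * x ^ b := by
        rw [mul_mul_mul_comm, ← Real.exp_add, add_neg_cancel, Real.exp_zero, mul_one]

lemma choose_add_mul_rpow_le {b β : ℝ} {k : ℕ} (hb : 0 ≤ b) (hk : k < β) :
    Ring.choose (β + b) k * (β - k) ^ b ≤ Ring.choose β k * β ^ b := by
  induction k with
  | zero => simp
  | succ k ih =>
    push_cast at hk ⊢
    have bernoulli := add_mul_mul_sub_rpow_le (x := β - k) (e := 1) hb (by linarith) (by linarith)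
    refine le_of_mul_le_mul_left ?_ (k.cast_add_one_pos (α := ℝ))
    calc (k + 1) * (Ring.choose (β + b) (k + 1) * (β - (k + 1)) ^ b)
        = Ring.choose (β + b) k * ((β - k + b * 1) * (β - k - 1) ^ b) := by
          rw [← mul_assoc, add_one_mul_choose_succ]
          ring_nf
      _ ≤ Ring.choose (β + b) k * ((β - k) * (β - k) ^ b) :=
          mul_le_mul_of_nonneg_left bernoulli (choose_pos_of_lt (by linarith)).le
      _ = (β - k) * (Ring.choose (β + b) k * (β - k) ^ b) := by ring
      _ ≤ (β - k) * (Ring.choose β k * β ^ b) :=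
          mul_le_mul_of_nonneg_left (ih (by linarith)) (by linarith)
      _ = (k + 1) * (Ring.choose β (k + 1) * β ^ b) := by
          rw [← mul_assoc, ← mul_assoc, add_one_mul_choose_succ]

lemma choose_mul_rpow_le {s α : ℝ} {k : ℕ} (hs : 0 ≤ s) (hk : k < α + 1) :
    Ring.choose α k * (α + s + 1) ^ s ≤ Ring.choose (α + s) k * (α + s + 1 - k) ^ s := by
  induction k with
  | zero => simp
  | succ k ih =>
    push_cast at hk ⊢
    have bernoulli := add_mul_mul_sub_rpow_le (x := α + s - k) (e := -1) hs (by linarith)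
      (by linarith)
    refine le_of_mul_le_mul_left ?_ (k.cast_add_one_pos (α := ℝ))
    calc (k + 1) * (Ring.choose α (k + 1) * (α + s + 1) ^ s)
        = (α - k) * (Ring.choose α k * (α + s + 1) ^ s) := by
          rw [← mul_assoc, ← mul_assoc, add_one_mul_choose_succ]
      _ ≤ (α - k) * (Ring.choose (α + s) k * (α + s + 1 - k) ^ s) :=
          mul_le_mul_of_nonneg_left (ih (by linarith)) (by linarith)
      _ = Ring.choose (α + s) k * ((α + s - k + s * -1) * (α + s - k - -1) ^ s) := by ring_nf
      _ ≤ Ring.choose (α + s) k * ((α + s - k) * (α + s - k) ^ s) :=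
          mul_le_mul_of_nonneg_left bernoulli (choose_pos_of_lt (by linarith)).le
      _ = (k + 1) * (Ring.choose (α + s) (k + 1) * (α + s + 1 - (k + 1)) ^ s) := by
          rw [← mul_assoc, ← mul_assoc, add_one_mul_choose_succ]
          ring_nf

end GeneralizedBinomial

section TruncatedBinomial

open Finset

/-- The first `R + 1` terms of the binomial expansion of `(u + (1 - u)) ^ α = 1`. For `R < α` this
is the regularised incomplete Beta function `I_u (α - R, R + 1)`. -/
noncomputable def truncatedBinomial (α : ℝ) (R : ℕ) (u : ℝ) : ℝ :=
  ∑ r ∈ range (R + 1), Ring.choose α r * (u ^ (α - r) * (1 - u) ^ r)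

lemma truncatedBinomial_zero {α : ℝ} {R : ℕ} (hR : R < α) : truncatedBinomial α R 0 = 0 :=
  sum_eq_zero fun r hr ↦ by
    have : (r : ℝ) ≤ R := Nat.cast_le.2 (mem_range_succ_iff.1 hr)
    rw [Real.zero_rpow (by linarith), zero_mul, mul_zero]

lemma truncatedBinomial_one (α : ℝ) (R : ℕ) : truncatedBinomial α R 1 = 1 := by
  simp [truncatedBinomial, sum_range_succ']

lemma continuous_truncatedBinomial {α : ℝ} {R : ℕ} (hR : R < α) :
    Continuous (truncatedBinomial α R) := by
  refine continuous_finsetSum _ fun r hr ↦ ?_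
  have : (r : ℝ) ≤ R := Nat.cast_le.2 (mem_range_succ_iff.1 hr)
  have := Real.continuous_rpow_const (q := α - r) (by linarith)
  fun_prop

lemma hasDerivAt_truncatedBinomial (α : ℝ) (R : ℕ) {u : ℝ} (hu : 0 < u) :
    HasDerivAt (truncatedBinomial α R)
      ((R + 1) * Ring.choose α (R + 1) * (u ^ (α - (R + 1)) * (1 - u) ^ R)) u := by
  have hasDerivAt_term (r : ℕ) := (((Real.hasDerivAt_rpow_const (p := α - r) (.inl hu.ne')).mul
    (((hasDerivAt_id u).const_sub 1).pow r)).const_mul (Ring.choose α r))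
  induction R with
  | zero =>
    have : truncatedBinomial α 0 = fun u ↦ u ^ α := funext fun u ↦ by simp [truncatedBinomial]
    simpa [this] using hasDerivAt_term 0
  | succ R ih =>
    have sum_succ : truncatedBinomial α (R + 1) = truncatedBinomial α R +
        fun u ↦ Ring.choose α (R + 1) * (u ^ (α - (R + 1 : ℕ)) * (1 - u) ^ (R + 1)) :=
      funext fun u ↦ sum_range_succ _ _
    rw [sum_succ]
    refine (ih.add (hasDerivAt_term (R + 1))).congr_deriv ?_
    have step := add_one_mul_choose_succ α (R + 1)
    simp only [Pi.pow_apply, id, Nat.add_sub_cancel]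
    push_cast at step ⊢
    rw [step, sub_sub]
    ring

lemma truncatedBinomial_nonneg {α : ℝ} {R : ℕ} (hR : R < α + 1) {u : ℝ}
    (hu : u ∈ Set.Icc (0 : ℝ) 1) : 0 ≤ truncatedBinomial α R u :=
  sum_nonneg fun r hr ↦ by
    have : (r : ℝ) ≤ R := Nat.cast_le.2 (mem_range_succ_iff.1 hr)
    exact mul_nonneg (choose_pos_of_lt (by linarith)).le
      (mul_nonneg (Real.rpow_nonneg hu.1 _) (pow_nonneg (sub_nonneg.2 hu.2) r))

section Comparison

/-- The function whose monotonicity compares the truncated binomials of exponents `α` and `β`;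
dividing by `Ring.choose _ (R + 1)` makes their derivatives differ by a power of `v` only. -/
noncomputable def truncatedBinomialGap (α β : ℝ) (R : ℕ) (u v : ℝ) : ℝ :=
  u ^ (β - α) * (truncatedBinomial α R v / Ring.choose α (R + 1)) -
    truncatedBinomial β R v / Ring.choose β (R + 1)

variable {α β : ℝ} {R : ℕ} {u v : ℝ} (hR : R < α) (hαβ : α ≤ β)
include hR hαβ

lemma continuous_truncatedBinomialGap : Continuous (truncatedBinomialGap α β R u) := by
  have hα := continuous_truncatedBinomial hR
  have hβ := continuous_truncatedBinomial (hR.trans_le hαβ)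
  unfold truncatedBinomialGap
  fun_prop

lemma hasDerivAt_truncatedBinomialGap (hv : 0 < v) :
    HasDerivAt (truncatedBinomialGap α β R u)
      ((R + 1) * v ^ (α - (R + 1)) * (1 - v) ^ R * (u ^ (β - α) - v ^ (β - α))) v := by
  have hα : Ring.choose α (R + 1) ≠ 0 := (choose_pos_of_lt (by push_cast; linarith)).ne'
  have hβ : Ring.choose β (R + 1) ≠ 0 := (choose_pos_of_lt (by push_cast; linarith)).ne'
  refine ((((hasDerivAt_truncatedBinomial α R hv).div_const _).const_mul (u ^ (β - α))).sub
    ((hasDerivAt_truncatedBinomial β R hv).div_const (Ring.choose β (R + 1)))).congr_deriv ?_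
  have rpow_split : v ^ (β - (R + 1)) = v ^ (α - (R + 1)) * v ^ (β - α) := by
    rw [← Real.rpow_add hv]
    ring_nf
  rw [rpow_split]
  field_simp

lemma truncatedBinomial_div_choose_le (hu : u ∈ Set.Icc (0 : ℝ) 1) :
    truncatedBinomial β R u / Ring.choose β (R + 1) ≤
      u ^ (β - α) * (truncatedBinomial α R u / Ring.choose α (R + 1)) := by
  have monotone : MonotoneOn (truncatedBinomialGap α β R u) (Set.Icc 0 u) := by
    refine monotoneOn_of_hasDerivWithinAt_nonneg (convex_Icc 0 u)
      (continuous_truncatedBinomialGap hR hαβ).continuousOn (fun v hv ↦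
        (hasDerivAt_truncatedBinomialGap hR hαβ (interior_Icc.subset hv).1).hasDerivWithinAt)
      fun v hv ↦ ?_
    rw [interior_Icc] at hv
    have := Real.rpow_le_rpow hv.1.le hv.2.le (sub_nonneg.2 hαβ)
    have := Real.rpow_nonneg hv.1.le (α - (R + 1))
    have := pow_nonneg (sub_nonneg.2 (hv.2.le.trans hu.2)) R
    exact mul_nonneg (by positivity) (by linarith)
  have gap_zero : truncatedBinomialGap α β R u 0 = 0 := by
    simp [truncatedBinomialGap, truncatedBinomial_zero hR,
      truncatedBinomial_zero (hR.trans_le hαβ)]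
  exact sub_nonneg.1 (gap_zero ▸ monotone ⟨le_rfl, hu.1⟩ ⟨hu.1, le_rfl⟩ hu.1)

lemma one_sub_truncatedBinomial_div_choose_le (hu : u ∈ Set.Icc (0 : ℝ) 1) :
    u ^ (β - α) * ((1 - truncatedBinomial α R u) / Ring.choose α (R + 1)) ≤
      (1 - truncatedBinomial β R u) / Ring.choose β (R + 1) := by
  have antitone : AntitoneOn (truncatedBinomialGap α β R u) (Set.Icc u 1) := by
    refine antitoneOn_of_hasDerivWithinAt_nonpos (convex_Icc u 1)
      (continuous_truncatedBinomialGap hR hαβ).continuousOn (fun v hv ↦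
        (hasDerivAt_truncatedBinomialGap hR hαβ
          (hu.1.trans_lt (interior_Icc.subset hv).1)).hasDerivWithinAt)
      fun v hv ↦ ?_
    rw [interior_Icc] at hv
    have := Real.rpow_le_rpow hu.1 hv.1.le (sub_nonneg.2 hαβ)
    have := Real.rpow_nonneg (hu.1.trans hv.1.le) (α - (R + 1))
    have := pow_nonneg (sub_nonneg.2 hv.2.le) R
    exact mul_nonpos_of_nonneg_of_nonpos (by positivity) (by linarith)
  have gap_one_le := antitone ⟨le_rfl, hu.2⟩ ⟨hu.2, le_rfl⟩ hu.2
  simp only [truncatedBinomialGap, truncatedBinomial_one] at gap_one_le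
  rw [sub_div, sub_div, mul_sub]
  linarith

end Comparison

lemma truncatedBinomial_le_one {α : ℝ} {R : ℕ} (hR : R < α) {u : ℝ}
    (hu : u ∈ Set.Icc (0 : ℝ) 1) : truncatedBinomial α R u ≤ 1 := by
  have monotone : MonotoneOn (truncatedBinomial α R) (Set.Icc 0 1) := by
    refine monotoneOn_of_hasDerivWithinAt_nonneg (convex_Icc 0 1)
      (continuous_truncatedBinomial hR).continuousOn (fun v hv ↦
        (hasDerivAt_truncatedBinomial α R (interior_Icc.subset hv).1).hasDerivWithinAt)
      fun v hv ↦ ?_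
    rw [interior_Icc] at hv
    have := choose_pos_of_lt (α := α) (k := R + 1) (by push_cast; linarith)
    have := Real.rpow_nonneg hv.1.le (α - (R + 1))
    have := pow_nonneg (sub_nonneg.2 hv.2.le) R
    positivity
  exact truncatedBinomial_one α R ▸ monotone hu ⟨zero_le_one, le_rfl⟩ hu.2

/-- The zero of order `β + b - R` at `0` absorbs the pole of `u ^ (-b)`. -/
lemma rpow_neg_mul_truncatedBinomial_le {β b : ℝ} {R : ℕ} (hR : R + 1 < β) (hb : 0 ≤ b) {u : ℝ}
    (hu : u ∈ Set.Ioc (0 : ℝ) 1) :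
    u ^ (-b) * truncatedBinomial (β + b) R u ≤ (β / (β - (R + 1))) ^ b := by
  have u_mem : u ∈ Set.Icc (0 : ℝ) 1 := Set.Ioc_subset_Icc_self hu
  have choose_pos : 0 < Ring.choose β (R + 1) := choose_pos_of_lt (by push_cast; linarith)
  have choose_pos' : 0 < Ring.choose (β + b) (R + 1) := choose_pos_of_lt (by push_cast; linarith)
  have rpow_pos : 0 < (β - (R + 1)) ^ b := Real.rpow_pos_of_pos (by linarith) b
  have compare := truncatedBinomial_div_choose_le (by linarith) (le_add_of_nonneg_right hb) u_mem
    (α := β) (R := R)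
  have choose_ratio := choose_add_mul_rpow_le (k := R + 1) hb (by exact_mod_cast hR)
  rw [add_sub_cancel_left, div_le_iff₀ choose_pos'] at compare
  push_cast at choose_ratio
  calc u ^ (-b) * truncatedBinomial (β + b) R u
      ≤ u ^ (-b) * (u ^ b * (1 / Ring.choose β (R + 1)) * Ring.choose (β + b) (R + 1)) := by
        grw [compare, truncatedBinomial_le_one (by linarith) u_mem]
        all_goals exact Real.rpow_nonneg u_mem.1 _
    _ = Ring.choose (β + b) (R + 1) / Ring.choose β (R + 1) := by
        rw [← mul_assoc, ← mul_assoc, ← Real.rpow_add hu.1, neg_add_cancel, Real.rpow_zero]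
        ring
    _ ≤ (β / (β - (R + 1))) ^ b := by
        rw [Real.div_rpow (by linarith) (by linarith), div_le_div_iff₀ choose_pos rpow_pos]
        linarith

lemma one_sub_truncatedBinomial_le {α s : ℝ} {R : ℕ} (hR : R < α) (hs : 0 ≤ s) {u : ℝ}
    (hu : u ∈ Set.Ioc (0 : ℝ) 1) :
    1 - truncatedBinomial α R u ≤ ((α + s - R) / (u * (α + s + 1))) ^ s := by
  have u_mem : u ∈ Set.Icc (0 : ℝ) 1 := Set.Ioc_subset_Icc_self hu
  have choose_pos : 0 < Ring.choose α (R + 1) := choose_pos_of_lt (by push_cast; linarith)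
  have choose_pos' : 0 < Ring.choose (α + s) (R + 1) := choose_pos_of_lt (by push_cast; linarith)
  have rpow_pos : 0 < (u * (α + s + 1)) ^ s := Real.rpow_pos_of_pos (mul_pos hu.1 (by linarith)) s
  have compare := one_sub_truncatedBinomial_div_choose_le hR (le_add_of_nonneg_right hs) u_mem
  have choose_ratio := choose_mul_rpow_le (α := α) (k := R + 1) hs (by push_cast; linarith)
  have nonneg := truncatedBinomial_nonneg (α := α + s) (R := R) (by linarith) u_mem
  rw [add_sub_cancel_left, ← mul_div_assoc, div_le_div_iff₀ choose_pos choose_pos'] at compare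
  rw [Real.div_rpow (by linarith) (mul_nonneg hu.1.le (by linarith)), le_div_iff₀ rpow_pos,
    Real.mul_rpow hu.1.le (by linarith)]
  refine le_of_mul_le_mul_left ?_ choose_pos'
  push_cast at choose_ratio
  calc Ring.choose (α + s) (R + 1) *
        ((1 - truncatedBinomial α R u) * (u ^ s * (α + s + 1) ^ s))
      = u ^ s * (1 - truncatedBinomial α R u) * Ring.choose (α + s) (R + 1) *
          (α + s + 1) ^ s := by ring
    _ ≤ 1 * Ring.choose α (R + 1) * (α + s + 1) ^ s := by
        have := compare.trans (mul_le_mul_of_nonneg_right (sub_le_self 1 nonneg) choose_pos.le)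
        exact mul_le_mul_of_nonneg_right this (Real.rpow_nonneg (by linarith) s)
    _ ≤ Ring.choose (α + s) (R + 1) * (α + s - R) ^ s := by
        rw [one_mul]
        exact choose_ratio.trans_eq (by ring_nf)

end TruncatedBinomial

section BernsteinForm

open Real Finset

/-- The polynomial `∑ w r * x ^ (σ + 2 * (N - r)) * (1 - x ^ 2) ^ r`, summed over `r ≤ R`: up to the
factor `x ^ σ`, which fixes the parity, a combination of Bernstein polynomials in `x ^ 2`. -/
noncomputable def parityBernstein (w : ℕ → ℝ) (N R σ : ℕ) : ℝ[X] :=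
  ∑ r ∈ range (R + 1), C (w r) * (X ^ σ * (X ^ 2) ^ (N - r) * (1 - X ^ 2) ^ r)

lemma eval_parityBernstein (w : ℕ → ℝ) (N R σ : ℕ) (x : ℝ) :
    (parityBernstein w N R σ).eval x =
      ∑ r ∈ range (R + 1), w r * (x ^ σ * (x ^ 2) ^ (N - r) * (1 - x ^ 2) ^ r) := by
  simp [parityBernstein, eval_finsetSum]

lemma eval_neg_parityBernstein (w : ℕ → ℝ) (N R σ : ℕ) (x : ℝ) :
    (parityBernstein w N R σ).eval (-x) = (-1) ^ σ * (parityBernstein w N R σ).eval x := by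
  simp only [eval_parityBernstein, mul_sum, neg_sq, neg_pow x σ]
  exact sum_congr rfl fun r _ ↦ by ring

lemma eval_parityBernstein_nonneg {w : ℕ → ℝ} {R : ℕ} (hw : ∀ r ≤ R, 0 ≤ w r) (N σ : ℕ) {x : ℝ}
    (hx : x ∈ Set.Icc (0 : ℝ) 1) : 0 ≤ (parityBernstein w N R σ).eval x := by
  rw [eval_parityBernstein]
  refine sum_nonneg fun r hr ↦ mul_nonneg (hw r (mem_range_succ_iff.1 hr)) ?_
  have := hx.1
  have := pow_nonneg (sub_nonneg.2 (pow_le_one₀ (n := 2) hx.1 hx.2)) r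
  positivity

lemma norm_cos_sq_add_norm_sin_sq (z : ℂ) :
    ‖Complex.cos z‖ ^ 2 + ‖Complex.sin z‖ ^ 2 = cosh (2 * z.im) := by
  have sub_conj : z - (starRingEnd ℂ) z = (2 * z.im : ℝ) * Complex.I := Complex.sub_conj z
  have addition_formula := Complex.cos_sub z ((starRingEnd ℂ) z)
  rw [sub_conj, Complex.cos_mul_I, Complex.cos_conj, Complex.sin_conj, Complex.mul_conj',
    Complex.mul_conj'] at addition_formula
  exact_mod_cast addition_formula.symm

/-- With nonnegative weights only `‖cos z‖` and `‖sin z‖` matter; homogeneity then moves the point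
with these coordinates to the unit circle. -/
lemma exists_norm_aeval_cos_parityBernstein_le {w : ℕ → ℝ} {N R : ℕ} (hR : R ≤ N)
    (hw : ∀ r ≤ R, 0 ≤ w r) (σ : ℕ) (z : ℂ) :
    ∃ t ∈ Set.Icc (0 : ℝ) 1, ‖aeval (Complex.cos z) (parityBernstein w N R σ)‖ ≤
      √(cosh (2 * z.im)) ^ (2 * N + σ) * (parityBernstein w N R σ).eval t := by
  set ρ := √(cosh (2 * z.im))
  set t := ‖Complex.cos z‖ / ρ
  have ρ_pos : 0 < ρ := sqrt_pos.2 (cosh_pos _)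
  have cos_eq : ‖Complex.cos z‖ = ρ * t := (mul_div_cancel₀ _ ρ_pos.ne').symm
  have sin_sq_eq : ‖Complex.sin z‖ ^ 2 = ρ ^ 2 * (1 - t ^ 2) := by
    have := norm_cos_sq_add_norm_sin_sq z
    rw [cos_eq, ← sq_sqrt (cosh_pos (2 * z.im)).le] at this
    linear_combination this
  have t_mem : t ∈ Set.Icc (0 : ℝ) 1 := by
    refine ⟨by positivity, (sq_le_one_iff₀ (by positivity)).1 ?_⟩
    exact sub_nonneg.1 (nonneg_of_mul_nonneg_right (sin_sq_eq ▸ sq_nonneg _) (pow_pos ρ_pos 2))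
  have norm_term (r : ℕ) (hr : r ∈ range (R + 1)) :
      ‖aeval (Complex.cos z) (C (w r) * (X ^ σ * (X ^ 2) ^ (N - r) * (1 - X ^ 2) ^ r))‖ =
        ρ ^ (2 * N + σ) * (w r * (t ^ σ * (t ^ 2) ^ (N - r) * (1 - t ^ 2) ^ r)) := by
    have r_le := mem_range_succ_iff.1 hr
    simp only [map_mul, map_pow, map_sub, map_one, aeval_X, aeval_C, ← Complex.sin_sq, norm_mul,
      norm_pow]
    rw [cos_eq, sin_sq_eq, mul_pow (ρ ^ 2), norm_algebraMap', norm_of_nonneg (hw r r_le),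
      show 2 * N + σ = σ + 2 * (N - r) + 2 * r by lia]
    ring
  refine ⟨t, t_mem, ?_⟩
  rw [eval_parityBernstein, mul_sum, parityBernstein, map_sum]
  exact norm_sum_le_of_le _ fun r hr ↦ (norm_term r hr).le

lemma norm_aeval_cos_parityBernstein_le {w : ℕ → ℝ} {N R σ : ℕ} {B : ℝ} (hR : R ≤ N)
    (hw : ∀ r ≤ R, 0 ≤ w r)
    (hB : ∀ x ∈ Set.Icc (0 : ℝ) 1, (parityBernstein w N R σ).eval x ≤ B) (z : ℂ) :
    ‖aeval (Complex.cos z) (parityBernstein w N R σ)‖ ≤ exp ((2 * N + σ) * z.im ^ 2) * B := by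
  obtain ⟨t, t_mem, norm_le⟩ := exists_norm_aeval_cos_parityBernstein_le hR hw σ z
  have sqrt_cosh_le : √(cosh (2 * z.im)) ≤ exp (z.im ^ 2) := by
    rw [sqrt_le_left (exp_pos _).le, ← exp_nat_mul]
    exact (cosh_le_exp_half_sq _).trans_eq (by ring_nf)
  have pow_le : √(cosh (2 * z.im)) ^ (2 * N + σ) ≤ exp ((2 * N + σ) * z.im ^ 2) := by
    grw [sqrt_cosh_le, ← exp_nat_mul]
    push_cast
    rfl
  exact norm_le.trans
    (mul_le_mul pow_le (hB t t_mem) (eval_parityBernstein_nonneg hw N σ t_mem) (exp_pos _).le)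

end BernsteinForm

section InversePower

/-- The polynomial `x ^ (-c) * truncatedBinomial (N + (c + σ) / 2) R (x ^ 2)`, which approximates
`x ^ (-c)` away from `0` and is tame near `0`. -/
noncomputable def inversePowerPoly (c : ℝ) (N R σ : ℕ) : ℝ[X] :=
  parityBernstein (Ring.choose (N + (c + σ) / 2)) N R σ

variable {c x : ℝ} {N R : ℕ}

lemma eval_inversePowerPoly (hR : R ≤ N) (c : ℝ) (σ : ℕ) (hx : 0 < x) :
    (inversePowerPoly c N R σ).eval x =
      x ^ (-c) * truncatedBinomial (N + (c + σ) / 2) R (x ^ 2) := by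
  rw [inversePowerPoly, eval_parityBernstein, truncatedBinomial, Finset.mul_sum]
  refine Finset.sum_congr rfl fun r hr ↦ ?_
  have r_le : r ≤ N := (Finset.mem_range_succ_iff.1 hr).trans hR
  have powers_eq : x ^ σ * (x ^ 2) ^ (N - r) = x ^ (-c) * (x ^ 2) ^ (N + (c + σ) / 2 - r) := by
    rw [← Real.rpow_natCast x 2, ← Real.rpow_mul hx.le, ← Real.rpow_add hx, ← Real.rpow_natCast,
      ← Real.rpow_natCast, ← Real.rpow_mul hx.le, ← Real.rpow_add hx, Nat.cast_sub r_le]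
    ring_nf
  rw [powers_eq]
  ring

lemma choose_inversePowerPoly_nonneg (hR : R ≤ N) (hc : 0 ≤ c) (σ : ℕ) (r : ℕ) (hr : r ≤ R) :
    0 ≤ Ring.choose (N + (c + σ) / 2) r := by
  have : (r : ℝ) ≤ N := Nat.cast_le.2 (hr.trans hR)
  exact (choose_pos_of_lt (by linarith [σ.cast_nonneg (α := ℝ)])).le

lemma eval_inversePowerPoly_le (hR : R + 1 < N) (hc : 0 ≤ c) (σ : ℕ)
    (hx : x ∈ Set.Icc (0 : ℝ) 1) :
    (inversePowerPoly c N R σ).eval x ≤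
      ((N + σ / 2) / (N + σ / 2 - (R + 1))) ^ (c / 2) := by
  have : (0 : ℝ) ≤ σ := σ.cast_nonneg
  have R_lt : (R + 1 : ℝ) < N := mod_cast hR
  have N_sub_nonneg : 0 ≤ N + σ / 2 - (R + 1 : ℝ) := by linarith
  rcases hx.1.eq_or_lt with rfl | x_pos
  · have (r : ℕ) (hr : r ∈ Finset.range (R + 1)) : N - r ≠ 0 := by
      have := Finset.mem_range.1 hr
      lia
    rw [inversePowerPoly, eval_parityBernstein,
      Finset.sum_eq_zero fun r hr ↦ by simp [this r hr]]
    positivity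
  · have sq_mem : x ^ 2 ∈ Set.Ioc (0 : ℝ) 1 := ⟨by positivity, pow_le_one₀ hx.1 hx.2⟩
    have rpow_eq : x ^ (-c) = (x ^ 2) ^ (-(c / 2)) := by
      rw [← Real.rpow_natCast, ← Real.rpow_mul x_pos.le]
      ring_nf
    rw [eval_inversePowerPoly (by lia) c σ x_pos, rpow_eq,
      show N + (c + σ) / 2 = N + σ / 2 + c / 2 by ring]
    exact rpow_neg_mul_truncatedBinomial_le (by linarith) (by linarith) sq_mem

lemma abs_eval_inversePowerPoly_sub_le (hR : R < N) (hc : 0 ≤ c) (σ : ℕ) {s : ℝ} (hs : 0 ≤ s)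
    (hx : x ∈ Set.Ioc (0 : ℝ) 1) :
    |(inversePowerPoly c N R σ).eval x - x ^ (-c)| ≤ x ^ (-c) *
      ((N + (c + σ) / 2 + s - R) / (x ^ 2 * (N + (c + σ) / 2 + s + 1))) ^ s := by
  have sq_mem : x ^ 2 ∈ Set.Ioc (0 : ℝ) 1 := ⟨pow_pos hx.1 2, pow_le_one₀ hx.1.le hx.2⟩
  have R_lt : (R : ℝ) < N + (c + σ) / 2 := by
    have : (R : ℝ) < N := mod_cast hR
    linarith [σ.cast_nonneg (α := ℝ)]
  have le_one := truncatedBinomial_le_one R_lt (Set.Ioc_subset_Icc_self sq_mem)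
  have x_rpow_nonneg := Real.rpow_nonneg hx.1.le (-c)
  rw [eval_inversePowerPoly hR.le c σ hx.1, ← mul_sub_one, abs_mul, abs_of_nonneg x_rpow_nonneg,
    abs_sub_comm, abs_of_nonneg (sub_nonneg.2 le_one)]
  exact mul_le_mul_of_nonneg_left (one_sub_truncatedBinomial_le R_lt hs sq_mem) x_rpow_nonneg

end InversePower

section Parameters

open Real

lemma rpow_le_exp_neg {c L q : ℝ} (hc : 1 ≤ c) (hL : 0 ≤ L) (hq : 0 ≤ q)
    (hqc : (1 + 1 / (4 * c)) * q ≤ 1) : q ^ (5 * c * L) ≤ exp (-L) := by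
  have q_le : q ≤ exp (-(1 / (5 * c))) := by
    refine le_trans ?_ (one_sub_le_exp_neg _)
    have : (1 + 1 / (4 * c)) * (1 - 1 / (5 * c)) = 1 + (c - 1) / (20 * c ^ 2) := by
      field_simp
      ring
    refine le_of_mul_le_mul_left (hqc.trans ?_) (by positivity : 0 < 1 + 1 / (4 * c))
    rw [this]
    exact le_add_of_nonneg_right (div_nonneg (by linarith) (by positivity))
  calc q ^ (5 * c * L) ≤ exp (-(1 / (5 * c))) ^ (5 * c * L) :=
        rpow_le_rpow hq q_le (by positivity)
    _ = exp (-L) := by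
        rw [← exp_mul]
        field_simp

lemma rpow_half_le_three_halves {b c q : ℝ} (hb : 0 ≤ b) (hbc : b ≤ c) (hc : 0 < c) (hq : 0 ≤ q)
    (hqc : q ≤ 1 + 2 / (3 * c)) : q ^ (b / 2) ≤ 3 / 2 := by
  have q_le : q ≤ exp (2 / (3 * c)) := hqc.trans (by linarith [add_one_le_exp (2 / (3 * c))])
  calc q ^ (b / 2) ≤ exp (2 / (3 * c)) ^ (b / 2) := rpow_le_rpow hq q_le (by positivity)
    _ = exp (b / c / 3) := by
        rw [← exp_mul]
        field_simp
    _ ≤ exp (1 / 3) := by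
        gcongr
        exact (div_le_one hc).2 hbc
    _ ≤ 3 / 2 := by
        have := exp_bound_div_one_sub_of_interval (x := 1 / 3) (by norm_num) (by norm_num)
        norm_num at this ⊢
        exact this

lemma exists_tail_length {c L : ℝ} (hc : 1 ≤ c) (hL : 2 / 3 ≤ L) :
    ∃ m : ℕ, 1 < m ∧ (1 + 1 / (4 * c)) * (m + c + 5 * c * L) + 1 / 2 ≤ 50 * (c ^ 2 * L) ∧
      (1 + 1 / (4 * c)) * (m + c + 5 * c * L) + 3 / 8 ≤ (1 + 2 / (3 * c)) * (m - 1) := by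
  set T := c ^ 2 * L
  have T_eq : T = c * L * c := by ring
  have cL_le : c * L ≤ T := T_eq ▸ le_mul_of_one_le_right (by positivity) hc
  have c_le : c ≤ 3 / 2 * (c * L) := by nlinarith
  have c_sq_le : c * c ≤ 3 / 2 * T := by nlinarith
  have le_ceil : 30 * T ≤ ⌈30 * T⌉₊ := Nat.le_ceil _
  have ceil_lt : ⌈30 * T⌉₊ < 30 * T + 1 := Nat.ceil_lt_add_one (by positivity)
  refine ⟨⌈30 * T⌉₊, ?_, ?_, ?_⟩ <;> set m := ⌈30 * T⌉₊
  · exact_mod_cast (by linarith : (1 : ℝ) < m)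
  · have : 1 / (4 * c) ≤ 1 / 4 := by gcongr; linarith
    have : (1 + 1 / (4 * c)) * (m + c + 5 * c * L) ≤ 5 / 4 * (m + c + 5 * c * L) :=
      mul_le_mul_of_nonneg_right (by linarith) (by positivity)
    linarith
  · have : 0 ≤ (5 * m - ((12 * c + 3) * (c + 5 * c * L) + 33 / 2 * c + 8)) / (12 * c) :=
      div_nonneg (by linarith) (by positivity)
    have sub_eq : (1 + 2 / (3 * c)) * (m - 1) - ((1 + 1 / (4 * c)) * (m + c + 5 * c * L) + 3 / 8) =
        (5 * m - ((12 * c + 3) * (c + 5 * c * L) + 33 / 2 * c + 8)) / (12 * c) := by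
      field_simp
      ring
    linarith

/-- The last two conditions control, respectively, the growth of the truncated binomial expansion
near `0` and its error on `[δ, 1]`. -/
lemma exists_truncation_parameters {c δ L : ℝ} (hc : 1 ≤ c) (hδ : 0 < δ) (hδ' : δ ≤ 1 / 2)
    (hL : 2 / 3 ≤ L) :
    ∃ N R : ℕ, R + 1 < N ∧ δ ^ 2 * (N + 1) ≤ 50 * (c ^ 2 * L) ∧
      δ ^ 2 * (N + 1 / 2) ≤ (1 + 2 / (3 * c)) * (N - (R + 1)) ∧
      (1 + 1 / (4 * c)) * (N - R + c + 5 * c * L) ≤ δ ^ 2 * N := by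
  obtain ⟨m, one_lt_m, W_le, W_add_le⟩ := exists_tail_length hc hL
  have δ_sq_le : δ ^ 2 ≤ 1 / 4 := by nlinarith
  have m_le_W : m ≤ (1 + 1 / (4 * c)) * (m + c + 5 * c * L) := by
    have : 0 ≤ 1 / (4 * c) * (m + c + 5 * c * L) := by positivity
    linarith [show 0 ≤ 5 * c * L by positivity]
  set W := (1 + 1 / (4 * c)) * (m + c + 5 * c * L)
  set N := ⌈W / δ ^ 2⌉₊
  have le_N : W ≤ δ ^ 2 * N := (div_le_iff₀' (by positivity)).1 (Nat.le_ceil _)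
  have N_lt : δ ^ 2 * N < W + δ ^ 2 := by
    have := (lt_div_iff₀ (by positivity)).1
      (sub_lt_iff_lt_add.2 (Nat.ceil_lt_add_one (a := W / δ ^ 2) (by positivity)))
    linarith
  have m_le_N : m ≤ N := by
    have : δ ^ 2 * N ≤ N := mul_le_of_le_one_left N.cast_nonneg (by linarith)
    exact_mod_cast m_le_W.trans (le_N.trans this)
  refine ⟨N, N - m, by lia, by linarith, ?_, ?_⟩
  · rw [Nat.cast_sub m_le_N]
    linarith
  · rw [Nat.cast_sub m_le_N, sub_sub_cancel]
    exact le_N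

lemma exp_neg_le_one_half {L : ℝ} (hL : log 2 ≤ L) : exp (-L) ≤ 1 / 2 :=
  calc exp (-L) ≤ exp (-log 2) := exp_le_exp.2 (neg_le_neg hL)
    _ = 1 / 2 := by rw [exp_neg, exp_log two_pos, one_div]

lemma degree_reduction_error_le {L y : ℝ} (hL : log 2 ≤ L) (hy : 12 * L ≤ y) :
    3 * (1 + y) * exp (-y) * (exp L * (3 / 4)) ≤ exp (-L) / 2 := by
  have exp_neg_le := exp_neg_le_one_half hL
  calc 3 * (1 + y) * exp (-y) * (exp L * (3 / 4))
      ≤ 3 * (2 * exp (y / 2)) * exp (-y) * (exp L * (3 / 4)) := by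
        gcongr
        linarith [add_one_le_exp (y / 2)]
    _ = 9 / 2 * exp (L - y / 2) := by
        rw [show L - y / 2 = y / 2 + -y + L by ring, exp_add, exp_add]
        ring
    _ ≤ 9 / 2 * exp (5 * -L) := by
        gcongr
        linarith
    _ = 9 / 2 * exp (-L) ^ 4 * exp (-L) := by
        rw [mul_assoc, ← pow_succ, ← exp_nat_mul]
        norm_num
    _ ≤ 9 / 2 * (1 / 2) ^ 4 * exp (-L) := by gcongr
    _ ≤ exp (-L) / 2 := by linarith [exp_pos (-L)]

end Parameters

section Approximation

open Real

variable {c γ δ L : ℝ} {N R σ : ℕ}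

lemma rpow_mul_rpow_half_le (hc : 0 ≤ c) (hγ : 1 ≤ γ) (hcγ : c ≤ γ) (hσ : σ ≤ 1) (hδ : 0 < δ)
    (hR : R + 1 < N)
    (hN : δ ^ 2 * (N + 1 / 2) ≤ (1 + 2 / (3 * γ)) * (N - (R + 1))) :
    δ ^ c * ((N + σ / 2) / (N + σ / 2 - (R + 1))) ^ (c / 2) ≤ 3 / 2 := by
  have R_lt : (R + 1 : ℝ) < N := mod_cast hR
  have : (0 : ℝ) ≤ σ := σ.cast_nonneg
  have σ_le : (σ : ℝ) ≤ 1 := mod_cast hσ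
  have sub_pos : 0 < N + σ / 2 - (R + 1 : ℝ) := by linarith
  have rpow_eq : δ ^ c = (δ ^ 2) ^ (c / 2) := by
    rw [← rpow_natCast, ← rpow_mul hδ.le]
    ring_nf
  rw [rpow_eq, ← mul_rpow (by positivity) (by positivity)]
  refine rpow_half_le_three_halves hc hcγ (by linarith) (by positivity) ?_
  rw [← mul_div_assoc, div_le_iff₀ sub_pos]
  calc δ ^ 2 * (N + σ / 2) ≤ δ ^ 2 * (N + 1 / 2) := by gcongr
    _ ≤ (1 + 2 / (3 * γ)) * (N - (R + 1)) := hN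
    _ ≤ (1 + 2 / (3 * γ)) * (N + σ / 2 - (R + 1)) := by
        gcongr
        linarith

lemma rpow_truncation_ratio_le (hc : 0 ≤ c) (hγ : 1 ≤ γ) (hcγ : c ≤ γ) (hσ : σ ≤ 1) (hδ : 0 < δ)
    (hL : 0 ≤ L) (hR : R < N)
    (hN : (1 + 1 / (4 * γ)) * (N - R + γ + 5 * γ * L) ≤ δ ^ 2 * N) {x : ℝ} (hx : δ ≤ x) :
    ((N + (c + σ) / 2 + 5 * γ * L - R) / (x ^ 2 * (N + (c + σ) / 2 + 5 * γ * L + 1))) ^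
      (5 * γ * L) ≤ exp (-L) := by
  have R_lt : (R : ℝ) < N := mod_cast hR
  have σ_le : (σ : ℝ) ≤ 1 := mod_cast hσ
  have x_pos := hδ.trans_le hx
  have γL_nonneg : 0 ≤ 5 * γ * L := by positivity
  have : (0 : ℝ) ≤ σ := σ.cast_nonneg
  refine rpow_le_exp_neg hγ hL (div_nonneg (by linarith) (by positivity)) ?_
  rw [← mul_div_assoc]
  refine div_le_one_of_le₀ ?_ (by positivity)
  calc (1 + 1 / (4 * γ)) * (N + (c + σ) / 2 + 5 * γ * L - R)
      ≤ (1 + 1 / (4 * γ)) * (N - R + γ + 5 * γ * L) := by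
        gcongr
        linarith
    _ ≤ δ ^ 2 * N := hN
    _ ≤ x ^ 2 * (N + (c + σ) / 2 + 5 * γ * L + 1) := by
        gcongr
        linarith

lemma norm_aeval_cos_scaled_inversePowerPoly_le (hc : 0 ≤ c) (hγ : 1 ≤ γ) (hcγ : c ≤ γ)
    (hσ : σ ≤ 1) (hδ : 0 < δ) (hR : R + 1 < N)
    (hN : δ ^ 2 * (N + 1 / 2) ≤ (1 + 2 / (3 * γ)) * (N - (R + 1))) (z : ℂ) :
    ‖aeval (Complex.cos z) (C (δ ^ c / 2) * inversePowerPoly c N R σ)‖ ≤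
      exp ((2 * N + σ) * z.im ^ 2) * (3 / 4) := by
  have R_le : R ≤ N := by lia
  have scaled_bound := rpow_mul_rpow_half_le hc hγ hcγ hσ hδ hR hN
  rw [map_mul, aeval_C, norm_mul, norm_algebraMap', norm_of_nonneg (by positivity)]
  calc δ ^ c / 2 * ‖aeval (Complex.cos z) (inversePowerPoly c N R σ)‖
      ≤ δ ^ c / 2 * (exp ((2 * N + σ) * z.im ^ 2) *
          ((N + σ / 2) / (N + σ / 2 - (R + 1))) ^ (c / 2)) := by
        gcongr
        exact norm_aeval_cos_parityBernstein_le R_le (choose_inversePowerPoly_nonneg R_le hc σ)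
          (fun x hx ↦ eval_inversePowerPoly_le hR hc σ hx) z
    _ = exp ((2 * N + σ) * z.im ^ 2) *
          (δ ^ c * ((N + σ / 2) / (N + σ / 2 - (R + 1))) ^ (c / 2) / 2) := by ring
    _ ≤ exp ((2 * N + σ) * z.im ^ 2) * (3 / 4) :=
        mul_le_mul_of_nonneg_left (by linarith) (exp_pos _).le

lemma abs_eval_scaled_inversePowerPoly_sub_le (hc : 0 ≤ c) (hγ : 1 ≤ γ) (hcγ : c ≤ γ)
    (hσ : σ ≤ 1) (hδ : 0 < δ) (hL : 0 ≤ L) (hR : R < N)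
    (hN : (1 + 1 / (4 * γ)) * (N - R + γ + 5 * γ * L) ≤ δ ^ 2 * N) {x : ℝ}
    (hx : x ∈ Set.Icc δ 1) :
    |(C (δ ^ c / 2) * inversePowerPoly c N R σ).eval x - δ ^ c / 2 * x ^ (-c)| ≤ exp (-L) / 2 := by
  have x_pos := hδ.trans_le hx.1
  have scaled_le_one : δ ^ c * x ^ (-c) ≤ 1 := by
    rw [rpow_neg x_pos.le, ← div_eq_mul_inv]
    exact div_le_one_of_le₀ (rpow_le_rpow hδ.le hx.1 hc) (by positivity)
  have poly_error := abs_eval_inversePowerPoly_sub_le hR hc σ (s := 5 * γ * L) (by positivity)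
    ⟨x_pos, hx.2⟩
  rw [eval_C_mul, ← mul_sub, abs_mul, abs_of_nonneg (by positivity)]
  calc δ ^ c / 2 * |(inversePowerPoly c N R σ).eval x - x ^ (-c)|
      ≤ δ ^ c / 2 * (x ^ (-c) * exp (-L)) := by
        gcongr
        refine poly_error.trans ?_
        gcongr
        exact rpow_truncation_ratio_le hc hγ hcγ hσ hδ hL hR hN hx.1
    _ = δ ^ c * x ^ (-c) * (exp (-L) / 2) := by ring
    _ ≤ exp (-L) / 2 := mul_le_of_le_one_left (by positivity) scaled_le_one

lemma exists_strip_bounded_approx (hc : 0 ≤ c) (hγ : 1 ≤ γ) (hcγ : c ≤ γ) (hσ : σ ≤ 1)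
    (hδ : 0 < δ) (hδ' : δ ≤ 1 / 2) (hL : 2 / 3 ≤ L) :
    ∃ D : ℝ[X], (∀ x, D.eval (-x) = (-1) ^ σ * D.eval x) ∧
      (∀ z : ℂ, ‖aeval (Complex.cos z) D‖ ≤
        exp (100 * γ ^ 2 * L / δ ^ 2 * z.im ^ 2) * (3 / 4)) ∧
      ∀ x ∈ Set.Icc δ 1, |D.eval x - δ ^ c / 2 * x ^ (-c)| ≤ exp (-L) / 2 := by
  obtain ⟨N, R, R_lt, N_le, growth, decay⟩ := exists_truncation_parameters hγ hδ hδ' hL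
  have degree_le : (2 * N + σ : ℝ) ≤ 100 * γ ^ 2 * L / δ ^ 2 := by
    have σ_le : (σ : ℝ) ≤ 1 := mod_cast hσ
    rw [le_div_iff₀ (by positivity)]
    nlinarith [sq_nonneg δ]
  refine ⟨C (δ ^ c / 2) * inversePowerPoly c N R σ, fun x ↦ ?_, fun z ↦ ?_, fun x hx ↦ ?_⟩
  · rw [eval_C_mul, eval_C_mul, inversePowerPoly, eval_neg_parityBernstein, mul_left_comm]
  · refine (norm_aeval_cos_scaled_inversePowerPoly_le hc hγ hcγ hσ hδ R_lt growth z).trans ?_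
    gcongr
  · exact abs_eval_scaled_inversePowerPoly_sub_le hc hγ hcγ hσ hδ (by linarith) (by lia) decay hx

lemma exists_natDegree_le_of_strip_bound {D : ℝ[X]} (hγ : 1 ≤ γ) (hδ : 0 < δ) (hδ' : δ ≤ 1 / 2)
    (hL : log 2 ≤ L)
    (hD : ∀ z : ℂ, ‖aeval (Complex.cos z) D‖ ≤
      exp (100 * γ ^ 2 * L / δ ^ 2 * z.im ^ 2) * (3 / 4)) :
    ∃ q : ℝ[X], (q.natDegree : ℝ) ≤ 125 * (γ / δ) * L ∧
      ∀ x ∈ Set.Icc (-1 : ℝ) 1, |q.eval x - D.eval x| ≤ exp (-L) / 2 := by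
  have le_L : 2 / 3 ≤ L := by linarith [log_two_gt_d9]
  set η := δ / (10 * γ) with η_def
  have norm_le (z : ℂ) (hz : |z.im| ≤ η) : ‖aeval (Complex.cos z) D‖ ≤ exp L * (3 / 4) := by
    have exponent_eq : 100 * γ ^ 2 * L / δ ^ 2 * η ^ 2 = L := by
      rw [η_def]
      field_simp
      norm_num
    refine (hD z).trans ?_
    nth_rw 2 [← exponent_eq]
    rw [← sq_abs z.im]
    gcongr
  set n := ⌈120 * (γ / δ) * L⌉₊
  have le_nη : 12 * L ≤ n * η :=
    calc 12 * L = 120 * (γ / δ) * L * η := by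
          rw [η_def]
          field_simp
          norm_num
      _ ≤ n * η := by
          gcongr
          exact Nat.le_ceil _
  obtain ⟨q, q_degree, q_sub_le⟩ :=
    exists_natDegree_le_abs_eval_sub_le (by positivity : 0 ≤ η) norm_le n
  refine ⟨q, ?_, fun x hx ↦ (q_sub_le x hx).trans (degree_reduction_error_le hL le_nη)⟩
  have q_degree' : (q.natDegree : ℝ) ≤ n := mod_cast q_degree
  have n_lt : n < 120 * (γ / δ) * L + 1 := Nat.ceil_lt_add_one (by positivity)
  have ratio_ge : 2 ≤ γ / δ := by
    rw [le_div_iff₀ hδ]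
    linarith
  nlinarith

lemma exists_parity_approx_rpow_neg (hc : 0 ≤ c) (hγ : 1 ≤ γ) (hcγ : c ≤ γ) (hσ : σ ≤ 1)
    (hδ : 0 < δ) (hδ' : δ ≤ 1 / 2) (hL : log 2 ≤ L) :
    ∃ P : ℝ[X], (∀ i, i % 2 ≠ σ % 2 → P.coeff i = 0) ∧
      (P.natDegree : ℝ) ≤ 125 * (γ / δ) * L ∧
      (∀ x ∈ Set.Icc δ 1, |P.eval x - δ ^ c / 2 * x ^ (-c)| ≤ exp (-L)) ∧
      ∀ x ∈ Set.Icc (-1 : ℝ) 1, |P.eval x| ≤ 1 := by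
  have le_L : 2 / 3 ≤ L := by linarith [log_two_gt_d9]
  obtain ⟨D, D_neg, D_strip, D_approx⟩ := exists_strip_bounded_approx hc hγ hcγ hσ hδ hδ' le_L
  obtain ⟨q, q_degree, q_sub_le⟩ := exists_natDegree_le_of_strip_bound hγ hδ hδ' hL D_strip
  obtain ⟨P, P_degree, P_parity, P_sub_le⟩ := exists_parity_abs_eval_sub_le D_neg q_sub_le
  refine ⟨P, P_parity, le_trans (mod_cast P_degree) q_degree, fun x hx ↦ ?_, fun x hx ↦ ?_⟩
  · have := P_sub_le x ⟨by linarith [hx.1], hx.2⟩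
    linarith [D_approx x hx, abs_sub_le (P.eval x) (D.eval x) (δ ^ c / 2 * x ^ (-c))]
  · have abs_D_le : |D.eval x| ≤ 3 / 4 := by
      have := D_strip (arccos x)
      rwa [← Complex.ofReal_cos, cos_arccos hx.1 hx.2, Complex.ofReal_im, zero_pow two_ne_zero,
        mul_zero, exp_zero, one_mul, ← Complex.coe_algebraMap, aeval_algebraMap_apply,
        norm_algebraMap', coe_aeval_eq_eval, norm_eq_abs] at this
    linarith [P_sub_le x hx, exp_neg_le_one_half hL,
      abs_sub_abs_le_abs_sub (P.eval x) (D.eval x)]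

end Approximation

/-- Polynomial approximations of negative power functions: for `ε, δ ∈ (0,1/2]`, `c > 0`,
and `f(x) = (δ^c/2)·x^{−c}`, there exist an even polynomial `P` and an odd polynomial `P′`
of degree `O((max(1,c)/δ)·log(1/ε))` that `ε`-approximate `f` on `[δ,1]` and are bounded by
`1` on `[−1,1]`. -/
theorem negative_power_poly_approx :
    ∃ K : ℝ, 0 < K ∧
      ∀ ε δ : ℝ, ε ∈ Set.Ioc (0 : ℝ) (1 / 2) → δ ∈ Set.Ioc (0 : ℝ) (1 / 2) →
        ∀ c : ℝ, 0 < c →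
          ∃ P P' : Polynomial ℝ,
            (∀ i : ℕ, i % 2 = 1 → P.coeff i = 0) ∧
            (∀ i : ℕ, i % 2 = 0 → P'.coeff i = 0) ∧
            (P.natDegree : ℝ) ≤ K * (max 1 c / δ) * Real.log (1 / ε) ∧
            (P'.natDegree : ℝ) ≤ K * (max 1 c / δ) * Real.log (1 / ε) ∧
            (∀ x : ℝ, x ∈ Set.Icc δ 1 →
              |P.eval x - δ ^ c / 2 * x ^ (-c)| ≤ ε) ∧
            (∀ x : ℝ, x ∈ Set.Icc δ 1 →
              |P'.eval x - δ ^ c / 2 * x ^ (-c)| ≤ ε) ∧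
            (∀ x : ℝ, x ∈ Set.Icc (-1 : ℝ) 1 → |P.eval x| ≤ 1) ∧
            (∀ x : ℝ, x ∈ Set.Icc (-1 : ℝ) 1 → |P'.eval x| ≤ 1) := by
  refine ⟨125, by norm_num, fun ε δ hε hδ c hc ↦ ?_⟩
  have log_two_le : Real.log 2 ≤ Real.log (1 / ε) :=
    Real.log_le_log two_pos ((le_one_div two_pos hε.1).2 hε.2)
  have exp_neg_eq : Real.exp (-Real.log (1 / ε)) = ε := by
    rw [one_div, Real.log_inv, neg_neg, Real.exp_log hε.1]
  have approx (σ : ℕ) (hσ : σ ≤ 1) := exp_neg_eq ▸ exists_parity_approx_rpow_neg hc.le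
    (le_max_left 1 c) (le_max_right 1 c) hσ hδ.1 hδ.2 log_two_le
  obtain ⟨P, P_even, P_degree, P_approx, P_le⟩ := approx 0 zero_le_one
  obtain ⟨P', P'_odd, P'_degree, P'_approx, P'_le⟩ := approx 1 le_rfl
  exact ⟨P, P', fun i hi ↦ P_even i (by lia), fun i hi ↦ P'_odd i (by lia), P_degree, P'_degree,
    P_approx, P'_approx, P_le, P'_le⟩
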